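/- For every n ≥ 1 and every binary head tree T with n leaves, the dependency tree bht2dep(T) is projective, i.e., for every position i the set of descendants of i under bht2dep(T) is an interval of consecutive positions. -/

import Mathlib

/-- Binary head trees (BHTs). -/
inductive BHT : Type where
  | leaf : BHT
  | nodeL (l r : BHT) : BHT
  | nodeR (l r : BHT) : BHT

/-- Number of leaves of a BHT. -/
def BHT.numLeaves : BHT → ℕ
  | .leaf => 1
  | .nodeL l r => l.numLeaves + r.numLeaves
  | .nodeR l r => l.numLeaves + r.numLeaves

/-- Head position of a BHT whose span of leaf positions starts at `i`. -/
def BHT.headAt : BHT → ℕ → ℕ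
  | .leaf, i => i
  | .nodeL l _, i => l.headAt i
  | .nodeR l r, i => r.headAt (i + l.numLeaves)

/-- Head position of a BHT placed over positions `0, …, numLeaves - 1`. -/
def BHT.head (T : BHT) : ℕ := T.headAt 0

/-- Arc set of a BHT whose span of leaf positions starts at `i`. -/
def BHT.arcsAt : BHT → ℕ → Set (ℕ × ℕ)
  | .leaf, _ => ∅
  | .nodeL l r, i =>
      insert (l.headAt i, r.headAt (i + l.numLeaves)) (l.arcsAt i ∪ r.arcsAt (i + l.numLeaves))
  | .nodeR l r, i =>
      insert (r.headAt (i + l.numLeaves), l.headAt i) (l.arcsAt i ∪ r.arcsAt (i + l.numLeaves))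

/-- Arc set of a BHT placed over positions `0, …, numLeaves - 1`. -/
def BHT.arcs (T : BHT) : Set (ℕ × ℕ) := T.arcsAt 0

/-- `S` is a subtree of `T` (placed over positions `0, …, numLeaves - 1`) whose
leaf span starts at absolute position `i`. -/
inductive BHT.SubtreeAt : BHT → ℕ → BHT → Prop
  | refl (T : BHT) : BHT.SubtreeAt T 0 T
  | inlL (l r S : BHT) (i : ℕ) : BHT.SubtreeAt l i S → BHT.SubtreeAt (BHT.nodeL l r) i S
  | inrL (l r S : BHT) (i : ℕ) :
      BHT.SubtreeAt r i S → BHT.SubtreeAt (BHT.nodeL l r) (l.numLeaves + i) S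
  | inlR (l r S : BHT) (i : ℕ) : BHT.SubtreeAt l i S → BHT.SubtreeAt (BHT.nodeR l r) i S
  | inrR (l r S : BHT) (i : ℕ) :
      BHT.SubtreeAt r i S → BHT.SubtreeAt (BHT.nodeR l r) (l.numLeaves + i) S

/-- `bht2dep T j = some i` if `i` is the unique position with `(i, j) ∈ arcs T`,
and `none` if `j` has no incoming arc. -/
noncomputable def bht2dep (n : ℕ) (T : BHT) : Fin n → Option (Fin n) := fun j =>
  letI := Classical.dec (∃! i : Fin n, ((i : ℕ), (j : ℕ)) ∈ T.arcs)
  if h : ∃! i : Fin n, ((i : ℕ), (j : ℕ)) ∈ T.arcs then some h.choose else none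

/-- `head` is a dependency tree on `n` words: exactly one root (position with
`head r = none`), and every position reaches the root by iterating `head`. -/
def IsDepTree {n : ℕ} (head : Fin n → Option (Fin n)) : Prop :=
  ∃ r : Fin n, head r = none ∧ (∀ r' : Fin n, head r' = none → r' = r) ∧
    ∀ j : Fin n, Relation.ReflTransGen (fun a b => head a = some b) j r

/-- A dependency tree is projective if every position's set of descendants is an
interval of consecutive positions. -/
def Projective {n : ℕ} (head : Fin n → Option (Fin n)) : Prop :=
  ∀ i : Fin n, ∃ a b : Fin n,
    ∀ j : Fin n, Relation.ReflTransGen (fun x y => head x = some y) j i ↔ (a ≤ j ∧ j ≤ b)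

/-- The six hexatags: `tL`/`tR` are terminal tags (leaf that is a left/right child);
`leftL`/`leftR` are `⇐L`/`⇐R` (internal left child with head-label L/R);
`rightL`/`rightR` are `⇒L`/`⇒R` (internal right child with head-label L/R). -/
inductive Hexatag : Type where
  | tL | tR | leftL | leftR | rightL | rightR
deriving DecidableEq

/-- A hexatag is terminal if it is `tL` or `tR`. -/
def Hexatag.isTerminal : Hexatag → Prop
  | .tL => True
  | .tR => True
  | _ => False

/-- In-order linearization; the Boolean records whether the current subtree is a
right child of its parent (the root counts as a left child by convention). -/
def BHT.hexatagsAux : BHT → Bool → List Hexatag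
  | .leaf, false => [.tL]
  | .leaf, true => [.tR]
  | .nodeL l r, b =>
      l.hexatagsAux false ++ (if b then Hexatag.rightL else Hexatag.leftL) :: r.hexatagsAux true
  | .nodeR l r, b =>
      l.hexatagsAux false ++ (if b then Hexatag.rightR else Hexatag.leftR) :: r.hexatagsAux true

/-- The hexatag linearization of a BHT. -/
def BHT.hexatags (T : BHT) : List Hexatag := T.hexatagsAux false

/-- The tags emitted for the leaves of a BHT, in left-to-right order. -/
def BHT.leafTagsAux : BHT → Bool → List Hexatag
  | .leaf, false => [.tL]
  | .leaf, true => [.tR]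
  | .nodeL l r, _ => l.leafTagsAux false ++ r.leafTagsAux true
  | .nodeR l r, _ => l.leafTagsAux false ++ r.leafTagsAux true

/-- The tags emitted for the leaves of a BHT in left-to-right order (root
counts as a left child by convention). -/
def BHT.leafTags (T : BHT) : List Hexatag := T.leafTagsAux false

/-- Partial BHTs: binary head trees possibly containing a dummy placeholder. -/
inductive PBHT : Type where
  | dummy : PBHT
  | leaf : PBHT
  | nodeL (l r : PBHT) : PBHT
  | nodeR (l r : PBHT) : PBHT
deriving DecidableEq

/-- Does a partial BHT contain a dummy? -/
def PBHT.hasDummy : PBHT → Bool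
  | .dummy => true
  | .leaf => false
  | .nodeL l r => l.hasDummy || r.hasDummy
  | .nodeR l r => l.hasDummy || r.hasDummy

/-- Substitute `u` for the dummy in a partial BHT. -/
def PBHT.subst : PBHT → PBHT → PBHT
  | .dummy, u => u
  | .leaf, _ => .leaf
  | .nodeL l r, u => .nodeL (l.subst u) (r.subst u)
  | .nodeR l r, u => .nodeR (l.subst u) (r.subst u)

/-- One step of the left-corner decoder on a stack of partial BHTs. -/
def hexStep : List PBHT → Hexatag → Option (List PBHT)
  | st, .tL => some (.leaf :: st)
  | t :: st, .tR => if t.hasDummy then some (t.subst .leaf :: st) else none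
  | t :: st, .leftL => some (.nodeL t .dummy :: st)
  | t :: st, .leftR => some (.nodeR t .dummy :: st)
  | t :: u :: st, .rightL =>
      if u.hasDummy then some (u.subst (.nodeL t .dummy) :: st) else none
  | t :: u :: st, .rightR =>
      if u.hasDummy then some (u.subst (.nodeR t .dummy) :: st) else none
  | _, _ => none

/-- The left-corner decoder: run the stack operations; succeed iff every
operation is defined and the final stack is a single dummy-free tree. -/
def tags2bht (τ : List Hexatag) : Option PBHT :=
  match τ.foldlM hexStep ([] : List PBHT) with
  | some [t] => if t.hasDummy then none else some t
  | _ => none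

/-- Embedding of BHTs into partial BHTs. -/
def BHT.toPBHT : BHT → PBHT
  | .leaf => .leaf
  | .nodeL l r => .nodeL l.toPBHT r.toPBHT
  | .nodeR l r => .nodeR l.toPBHT r.toPBHT

/-- Stack-count increment of a hexatag. -/
def Hexatag.delta : Hexatag → ℤ
  | .tL => 1
  | .tR => 0
  | .leftL => 0
  | .leftR => 0
  | .rightL => -1
  | .rightR => -1

/-- Running stack count `sₖ` after the first `k` tags of `τ`. -/
def stackCount (τ : List Hexatag) (k : ℕ) : ℤ :=
  ((τ.take k).map Hexatag.delta).sum

/-- Validity of a hexatag list (0-indexed: Lean index `k` is 1-indexed position `k+1`). -/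
def ValidTags (τ : List Hexatag) : Prop :=
  (τ.length % 2 = 1 ∧
    ∀ k : ℕ, ∀ t : Hexatag, τ[k]? = some t →
      (k % 2 = 0 → t.isTerminal) ∧ (k % 2 = 1 → ¬ t.isTerminal)) ∧
  τ[0]? = some Hexatag.tL ∧
  (∀ k : ℕ, ∀ t : Hexatag, τ[k]? = some t →
    (t = Hexatag.rightL ∨ t = Hexatag.rightR) → 2 ≤ stackCount τ k) ∧
  stackCount τ τ.length = 1

theorem rtg_mono' {A B : ℕ → ℕ → Prop} {a b : ℕ} (h : Relation.ReflTransGen A a b)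
    (hAB : ∀ x y, A x y → B x y) : Relation.ReflTransGen B a b :=
  Relation.ReflTransGen.mono hAB _ _ h

namespace BHT

theorem numLeaves_pos' (T : BHT) : 0 < T.numLeaves := by
  induction T with
  | leaf => simp [numLeaves]
  | nodeL l r h1 h2 => simp only [numLeaves]; omega
  | nodeR l r h1 h2 => simp only [numLeaves]; omega

theorem headAt_range (T : BHT) (i : ℕ) : i ≤ T.headAt i ∧ T.headAt i < i + T.numLeaves := by
  induction T generalizing i with
  | leaf => simp [numLeaves, headAt]
  | nodeL l r h1 h2 => have := h1 i; simp only [numLeaves, headAt]; omega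
  | nodeR l r h1 h2 => have := h2 (i + l.numLeaves); simp only [numLeaves, headAt]; omega

/-- Arc relation, from dependent to head. -/
def Up (T : BHT) (i : ℕ) (x y : ℕ) : Prop := (y, x) ∈ T.arcsAt i

theorem up_leaf (i x y : ℕ) : ¬ Up leaf i x y := by simp [Up, arcsAt]

theorem up_nodeL (l r : BHT) (i x y : ℕ) : Up (nodeL l r) i x y ↔
    (x = r.headAt (i + l.numLeaves) ∧ y = l.headAt i) ∨ Up l i x y ∨
      Up r (i + l.numLeaves) x y := by
  simp only [Up, arcsAt, Set.mem_insert_iff, Set.mem_union, Prod.mk.injEq]; tauto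

theorem up_nodeR (l r : BHT) (i x y : ℕ) : Up (nodeR l r) i x y ↔
    (x = l.headAt i ∧ y = r.headAt (i + l.numLeaves)) ∨ Up r (i + l.numLeaves) x y ∨
      Up l i x y := by
  simp only [Up, arcsAt, Set.mem_insert_iff, Set.mem_union, Prod.mk.injEq]; tauto

/-- The facts carried through the induction: arcs stay in the span `[s, e)`, the head `m` has
no incoming arc, incoming arcs are unique, everything reaches `m`, descendants are intervals. -/
structure Good (A : ℕ → ℕ → Prop) (s e m : ℕ) : Prop where
  range : ∀ x y, A x y → (s ≤ x ∧ x < e) ∧ (s ≤ y ∧ y < e)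
  mem : s ≤ m ∧ m < e
  root : ∀ y, ¬ A m y
  uniq : ∀ x y z, A x y → A x z → y = z
  reach : ∀ j, s ≤ j → j < e → Relation.ReflTransGen A j m
  interval : ∀ k, s ≤ k → k < e → ∃ a b, a < e ∧ b < e ∧
    ∀ j, Relation.ReflTransGen A j k ↔ (a ≤ j ∧ j ≤ b)

theorem Good.stay {A : ℕ → ℕ → Prop} {s e m : ℕ} (h : Good A s e m) {j k : ℕ}
    (hk : s ≤ k ∧ k < e) (hj : Relation.ReflTransGen A j k) : s ≤ j ∧ j < e := by
  rcases Relation.ReflTransGen.cases_head hj with rfl | ⟨c, hc, _⟩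
  · exact hk
  · exact (h.range _ _ hc).1

theorem Good.combine {A M D : ℕ → ℕ → Prop} {s1 e1 m s2 e2 d s e : ℕ}
    (hM : Good M s1 e1 m) (hD : Good D s2 e2 d)
    (hA : ∀ x y, A x y ↔ (x = d ∧ y = m) ∨ M x y ∨ D x y)
    (hse : (s = s1 ∧ e1 = s2 ∧ e = e2) ∨ (s = s2 ∧ e2 = s1 ∧ e = e1)) :
    Good A s e m := by
  have hm := hM.mem
  have hd := hD.mem
  have hrange : ∀ x y, A x y → (s ≤ x ∧ x < e) ∧ (s ≤ y ∧ y < e) := by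
    intro x y h
    rcases (hA x y).1 h with h | h | h
    · omega
    · have := hM.range _ _ h; omega
    · have := hD.range _ _ h; omega
  have hreach : ∀ j, s ≤ j → j < e → Relation.ReflTransGen A j m := by
    intro j h1 h2
    by_cases hj : s1 ≤ j ∧ j < e1
    · exact rtg_mono' (hM.reach j hj.1 hj.2) fun x y h => (hA x y).2 (Or.inr (Or.inl h))
    · refine Relation.ReflTransGen.tail (b := d) ?_ ((hA d m).2 (Or.inl ⟨rfl, rfl⟩))
      exact rtg_mono' (hD.reach j (by omega) (by omega))
        fun x y h => (hA x y).2 (Or.inr (Or.inr h))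
  refine ⟨hrange, by omega, ?_, ?_, hreach, ?_⟩
  · intro y h
    rcases (hA m y).1 h with h | h | h
    · omega
    · exact hM.root _ h
    · have := hD.range _ _ h; omega
  · intro x y z h1 h2
    rcases (hA x y).1 h1 with h1 | h1 | h1 <;> rcases (hA x z).1 h2 with h2 | h2 | h2
    · omega
    · have := hM.range _ _ h2; omega
    · exact absurd (h1.1 ▸ h2) (hD.root _)
    · have := hM.range _ _ h1; omega
    · exact hM.uniq _ _ _ h1 h2
    · have := hM.range _ _ h1; have := hD.range _ _ h2; omega
    · exact absurd (h2.1 ▸ h1) (hD.root _)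
    · have := hD.range _ _ h1; have := hM.range _ _ h2; omega
    · exact hD.uniq _ _ _ h1 h2
  · intro k hk1 hk2
    by_cases hkm : k = m
    · subst hkm
      refine ⟨s, e - 1, by omega, by omega, fun j => ⟨fun h => ?_, fun h => ?_⟩⟩
      · rcases Relation.ReflTransGen.cases_head h with rfl | ⟨c, hc, _⟩
        · omega
        · have := (hrange _ _ hc).1; omega
      · exact hreach j (by omega) (by omega)
    by_cases hk : s1 ≤ k ∧ k < e1
    · obtain ⟨a, b, ha, hb, hab⟩ := hM.interval k hk.1 hk.2
      refine ⟨a, b, by omega, by omega, fun j => ?_⟩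
      rw [← hab]
      refine ⟨fun h => ?_, fun h => rtg_mono' h fun x y h => (hA x y).2 (Or.inr (Or.inl h))⟩
      induction h using Relation.ReflTransGen.head_induction_on with
      | refl => exact .refl
      | head h _ ih =>
        have hs := hM.stay hk ih
        rcases (hA _ _).1 h with h | h | h
        · rw [h.2] at ih
          rcases Relation.ReflTransGen.cases_head ih with h' | ⟨c, hc, _⟩
          · exact absurd h'.symm hkm
          · exact absurd hc (hM.root _)
        · exact .head h ih
        · have := hD.range _ _ h; omega
    · have hk' : s2 ≤ k ∧ k < e2 := by omega
      obtain ⟨a, b, ha, hb, hab⟩ := hD.interval k hk'.1 hk'.2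
      refine ⟨a, b, by omega, by omega, fun j => ?_⟩
      rw [← hab]
      refine ⟨fun h => ?_, fun h => rtg_mono' h fun x y h => (hA x y).2 (Or.inr (Or.inr h))⟩
      induction h using Relation.ReflTransGen.head_induction_on with
      | refl => exact .refl
      | head h _ ih =>
        have hs := hD.stay hk' ih
        rcases (hA _ _).1 h with h | h | h
        · omega
        · have := hM.range _ _ h; omega
        · exact .head h ih

theorem good (T : BHT) (i : ℕ) : Good (Up T i) i (i + T.numLeaves) (T.headAt i) := by
  induction T generalizing i with
  | leaf =>
    simp only [numLeaves, headAt]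
    refine ⟨fun x y h => absurd h (up_leaf _ _ _), by omega, fun y => up_leaf _ _ _,
      fun x y z h => absurd h (up_leaf _ _ _), fun j h1 h2 => ?_, fun k h1 h2 => ?_⟩
    · obtain rfl : j = i := by omega
      exact .refl
    · refine ⟨k, k, h2, h2, fun j => ⟨fun h => ?_, fun h => ?_⟩⟩
      · rcases Relation.ReflTransGen.cases_head h with rfl | ⟨c, hc, _⟩
        · omega
        · exact absurd hc (up_leaf _ _ _)
      · obtain rfl : j = k := by omega
        exact .refl
  | nodeL l r h1 h2 =>
    exact (h1 i).combine (h2 (i + l.numLeaves)) (up_nodeL l r i)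
      (Or.inl ⟨rfl, rfl, by simp only [numLeaves]; omega⟩)
  | nodeR l r h1 h2 =>
    exact (h2 (i + l.numLeaves)).combine (h1 i) (up_nodeR l r i)
      (Or.inr ⟨rfl, rfl, by simp only [numLeaves]; omega⟩)

end BHT

theorem bht2dep_eq_some_iff (T : BHT) (x y : Fin T.numLeaves) :
    bht2dep T.numLeaves T x = some y ↔ BHT.Up T 0 x y := by
  have hg := BHT.good T 0
  unfold bht2dep
  by_cases h : ∃! i : Fin T.numLeaves, ((i : ℕ), (x : ℕ)) ∈ T.arcs
  · rw [dif_pos h]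
    have hc : ((h.choose : ℕ), (x : ℕ)) ∈ T.arcs := h.choose_spec.1
    rw [Option.some.injEq]
    constructor
    · intro e; rw [← e]; exact hc
    · intro e; exact Fin.ext (hg.uniq _ _ _ hc e)
  · rw [dif_neg h]
    refine ⟨fun e => by simp at e, fun e => absurd ⟨y, e, fun z hz => ?_⟩ h⟩
    exact Fin.ext (hg.uniq _ _ _ hz e)

theorem bht2dep_projective (n : ℕ) (hn : 1 ≤ n) (T : BHT) (hT : T.numLeaves = n) :
    Projective (bht2dep n T) := by
  subst hT
  have hg := BHT.good T 0
  intro i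
  obtain ⟨a, b, ha, hb, hab⟩ := hg.interval i (Nat.zero_le _) (by have := i.2; omega)
  refine ⟨⟨a, by omega⟩, ⟨b, by omega⟩, fun j => ?_⟩
  have key := hab j
  simp only [Fin.le_def]
  rw [← key]
  constructor
  · intro h
    exact Relation.ReflTransGen.lift (fun x : Fin T.numLeaves => (x : ℕ))
      (fun x y hxy => (bht2dep_eq_some_iff T x y).1 hxy) _ _ h
  · intro h
    have aux : ∀ p : ℕ, Relation.ReflTransGen (BHT.Up T 0) p i → ∀ q : Fin T.numLeaves,
        (q : ℕ) = p → Relation.ReflTransGen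
          (fun x y => bht2dep T.numLeaves T x = some y) q i := by
      intro p hp
      induction hp using Relation.ReflTransGen.head_induction_on with
      | refl => intro q hq; rw [Fin.ext hq]
      | @head u v h _ ih =>
        intro q hq
        have hv := (hg.range _ _ h).2
        refine .head (b := ⟨v, by omega⟩) ?_ (ih ⟨v, by omega⟩ rfl)
        rw [bht2dep_eq_some_iff, hq]
        exact h
    exact aux j h j rfl
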